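/- arXiv:2311.06591 — 2 statements merged into one kernel-verified Lean document; each statement's English description precedes it below -/
import Mathlib

section
/- For every τ in the complex upper half-plane: β(−1/τ) = α(τ/3) and α(−1/τ) = β(τ/3); moreover β(−1/τ)·(β(τ) − 3) = 3·(β(τ) + 6) and α(−1/τ)·(α(τ/9) − 3) = 3·(α(τ/9) + 6). -/
open Complex

/-- The Dedekind eta function `η(τ) = e^{πiτ/12} ∏_{n≥1} (1 - e^{2πinτ})`. -/
noncomputable def dedekindEta (τ : ℂ) : ℂ :=
  Complex.exp (Real.pi * I * τ / 12) *
    ∏' n : ℕ, (1 - Complex.exp (2 * Real.pi * I * (n + 1) * τ))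

/-- `α(τ) = 3 + 27 η(9τ)³/η(τ)³`. -/
noncomputable def alpha (τ : ℂ) : ℂ :=
  3 + 27 * dedekindEta (9 * τ) ^ 3 / dedekindEta τ ^ 3

/-- `β(τ) = 3 + η(τ/3)³/η(3τ)³`. -/
noncomputable def beta (τ : ℂ) : ℂ :=
  3 + dedekindEta (τ / 3) ^ 3 / dedekindEta (3 * τ) ^ 3

/-!
The inversion `η(-1/z) = (√I)⁻¹ √z η(z)` gives `η(-1/(rz)) / η(-1/z) = √r · η(rz) / η(z)` for real
`r > 0`. Cubing at `r = 9` yields `β(-1/τ) = α(τ/3)`, and the substitution `τ ↦ -3/τ` turns this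
into `α(-1/τ) = β(τ/3)`. Since `α - 3` and `β - 3` are built from mutually inverse eta quotients,
`(α(z) - 3)(β(3z) - 3) = 27`, which is the relation `a (b - 3) = 3 (b + 6)` between `a = α(z)` and
`b = β(3z)`.
-/

theorem csqrt_ofReal_mul {r : ℝ} (hr : 0 ≤ r) (z : ℂ) : sqrt (r * z) = √r * sqrt z := by
  obtain rfl | hr' := hr.eq_or_lt
  · simp
  obtain rfl | hz := eq_or_ne z 0
  · simp
  have hr₀ : (r : ℂ) ≠ 0 := ofReal_ne_zero.mpr hr'.ne'
  calc sqrt (r * z) = exp (log r / 2) * exp (log z / 2) := by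
        rw [sqrt_eq_exp (mul_ne_zero hr₀ hz), log_ofReal_mul hr' hz, ofReal_log hr, add_div,
          exp_add]
    _ = sqrt r * sqrt z := by rw [sqrt_eq_exp hr₀, sqrt_eq_exp hz]
    _ = √r * sqrt z := by rw [sqrt_of_nonneg (by exact_mod_cast hr), ofReal_re]

theorem csqrt_ne_zero {z : ℂ} (hz : z ≠ 0) : sqrt z ≠ 0 := by
  rw [sqrt_eq_exp hz]
  exact exp_ne_zero _

theorem dedekindEta_eq_modularForm_eta : dedekindEta = ModularForm.eta := by
  ext z
  simp only [dedekindEta, ModularForm.eta, ModularForm.eta_q_eq_cexp, Function.Periodic.qParam]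
  congr 2
  push_cast
  ring

theorem dedekindEta_ne_zero {z : ℂ} (hz : 0 < z.im) : dedekindEta z ≠ 0 :=
  dedekindEta_eq_modularForm_eta ▸ ModularForm.eta_ne_zero hz

theorem dedekindEta_neg_one_div {z : ℂ} (hz : 0 < z.im) :
    dedekindEta (-1 / z) = (sqrt I)⁻¹ * (sqrt z * dedekindEta z) :=
  dedekindEta_eq_modularForm_eta ▸ ModularForm.eta_comp_eq_csqrt_I_inv hz

theorem dedekindEta_neg_one_div_ofReal_mul_div {r : ℝ} (hr : 0 < r) {z : ℂ} (hz : 0 < z.im) :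
    dedekindEta (-1 / (r * z)) / dedekindEta (-1 / z) =
      √r * (dedekindEta (r * z) / dedekindEta z) := by
  have hrz : 0 < (r * z).im := by simpa using mul_pos hr hz
  have hI : sqrt I ≠ 0 := csqrt_ne_zero I_ne_zero
  have hsqrt : sqrt z ≠ 0 := csqrt_ne_zero (ne_of_apply_ne im hz.ne')
  rw [dedekindEta_neg_one_div hrz, dedekindEta_neg_one_div hz, csqrt_ofReal_mul hr.le]
  field_simp

theorem beta_neg_one_div {τ : ℂ} (hτ : 0 < τ.im) : beta (-1 / τ) = alpha (τ / 3) := by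
  have hτ₃ : 0 < (τ / 3).im := by simpa using hτ
  have hsqrt : √(9 : ℝ) = 3 := by rw [Real.sqrt_eq_iff_eq_sq] <;> norm_num
  have hη : dedekindEta (-1 / (9 * (τ / 3))) / dedekindEta (-1 / (τ / 3)) =
      3 * (dedekindEta (9 * (τ / 3)) / dedekindEta (τ / 3)) := by
    simpa only [hsqrt, ofReal_ofNat] using
      dedekindEta_neg_one_div_ofReal_mul_div (r := 9) (by norm_num) hτ₃
  calc beta (-1 / τ)
      = 3 + (dedekindEta (-1 / (9 * (τ / 3))) / dedekindEta (-1 / (τ / 3))) ^ 3 := by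
        rw [beta, div_pow, show -1 / τ / 3 = -1 / (9 * (τ / 3)) by ring,
          show 3 * (-1 / τ) = -1 / (τ / 3) by field_simp]
    _ = 3 + (3 * (dedekindEta (9 * (τ / 3)) / dedekindEta (τ / 3))) ^ 3 := by rw [hη]
    _ = alpha (τ / 3) := by
        rw [alpha]
        ring

theorem alpha_neg_one_div {τ : ℂ} (hτ : 0 < τ.im) : alpha (-1 / τ) = beta (τ / 3) := by
  have him : 0 < (-3 / τ).im := by
    simpa [neg_div, div_im, neg_mul] using
      div_pos (mul_pos three_pos hτ) (normSq_pos.mpr (ne_of_apply_ne im hτ.ne'))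
  calc alpha (-1 / τ) = alpha (-3 / τ / 3) := by ring_nf
    _ = beta (-1 / (-3 / τ)) := (beta_neg_one_div him).symm
    _ = beta (τ / 3) := by rw [div_div_eq_mul_div, neg_one_mul, neg_div_neg_eq]

theorem alpha_sub_three_mul_beta_sub_three {z : ℂ} (hz : 0 < z.im) :
    (alpha z - 3) * (beta (3 * z) - 3) = 27 := by
  have hη : dedekindEta z ≠ 0 := dedekindEta_ne_zero hz
  have hη₉ : dedekindEta (9 * z) ≠ 0 := dedekindEta_ne_zero (by simpa using hz)
  rw [alpha, beta, mul_div_cancel_left₀ z three_ne_zero, ← mul_assoc,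
    show (3 : ℂ) * 3 = 9 by norm_num]
  field_simp
  ring

/-- For `τ` in the upper half-plane: `β(−1/τ) = α(τ/3)`, `α(−1/τ) = β(τ/3)`,
`β(−1/τ)(β(τ) − 3) = 3(β(τ) + 6)` and `α(−1/τ)(α(τ/9) − 3) = 3(α(τ/9) + 6)`. -/
theorem alpha_beta_full_inversion (τ : ℂ) (hτ : 0 < τ.im) :
    beta (-1 / τ) = alpha (τ / 3) ∧
    alpha (-1 / τ) = beta (τ / 3) ∧
    beta (-1 / τ) * (beta τ - 3) = 3 * (beta τ + 6) ∧
    alpha (-1 / τ) * (alpha (τ / 9) - 3) = 3 * (alpha (τ / 9) + 6) := by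
  have hαβ : (alpha (τ / 3) - 3) * (beta τ - 3) = 27 := by
    simpa only [mul_div_cancel₀ τ three_ne_zero] using
      alpha_sub_three_mul_beta_sub_three (z := τ / 3) (by simpa using hτ)
  have hαβ₉ : (alpha (τ / 9) - 3) * (beta (τ / 3) - 3) = 27 := by
    convert alpha_sub_three_mul_beta_sub_three (z := τ / 9) (by simpa using hτ) using 4
    ring
  refine ⟨beta_neg_one_div hτ, alpha_neg_one_div hτ, ?_, ?_⟩
  · rw [beta_neg_one_div hτ]
    linear_combination hαβ
  · rw [alpha_neg_one_div hτ]
    linear_combination hαβ₉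
end

section
/- For every τ in the complex upper half-plane, (1 − 7c(τ)³ − 8c(τ)⁶)·η(3τ)⁴·η(6τ)⁴ = c(τ)³·η(τ)⁴·η(2τ)⁴; equivalently 1/c(τ)³ − 7 − 8c(τ)³ = η(τ)⁴η(2τ)⁴/(η(3τ)⁴η(6τ)⁴). -/
open Complex

/-- The nome `q = exp(2πiτ)`. -/
noncomputable def nome (τ : ℂ) : ℂ := Complex.exp (2 * Real.pi * I * τ)

/-- Ramanujan's cubic continued fraction, as an infinite product:
`c(τ) = q^{1/3} ∏_{n≥1} (1-q^{6n-1})(1-q^{6n-5})/(1-q^{6n-3})²`. -/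
noncomputable def c (τ : ℂ) : ℂ :=
  Complex.exp (2 * Real.pi * I * τ / 3) *
    ∏' n : ℕ,
      ((1 - nome τ ^ (6 * (n + 1) - 1)) * (1 - nome τ ^ (6 * (n + 1) - 5)) /
        (1 - nome τ ^ (6 * (n + 1) - 3)) ^ 2)

/-!
Write `φ(x) = ∑ x ^ n²` and `2 ψ(x) = ∑ x ^ (n (n - 1) / 2)`, the sums being over `n ∈ ℤ`. If
`x ^ 3 = q` and `v = q ^ (-1 / 3) c`, splitting these two series by the residue of `n` modulo `3`
and applying the Jacobi triple product to each part gives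
`φ(-x) = φ(-q³) (1 - 2 x v)` and `v ψ(x) = ψ(q³) (1 + x v)`.
By the triple product again, `φ(-x)` and `ψ(x)` are quotients of Euler functions, so multiplying
each relation over the three cube roots `x` of `q` gives
`1 - 8 c³ = φ(-q)⁴ / φ(-q³)⁴` and `1 + c³ = c³ ψ(q)⁴ / (q ψ(q³)⁴)`.
The product of the two is the claim, as `(1 - 8 c³) (1 + c³) = 1 - 7 c³ - 8 c⁶`.
-/

/-- The infinite `q`-Pochhammer symbol `(a; q)_∞ = ∏_{n ≥ 0} (1 - a q ^ n)`. -/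
noncomputable def qPoch {K : Type*} [NormedField K] (a q : K) : K := ∏' n : ℕ, (1 - a * q ^ n)

/-- The Euler function `(q; q)_∞`. -/
noncomputable def eulerFun {K : Type*} [NormedField K] (q : K) : K := qPoch q q

section QPochhammer

variable {K : Type*} [NormedField K] {a q : K}

lemma norm_pow_lt_one (hq : ‖q‖ < 1) {n : ℕ} (hn : n ≠ 0) : ‖q ^ n‖ < 1 := by
  rw [norm_pow]
  exact pow_lt_one₀ (norm_nonneg q) hq hn

lemma summable_norm_mul_pow (a : K) (hq : ‖q‖ < 1) : Summable fun n : ℕ ↦ ‖-(a * q ^ n)‖ := by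
  simpa using (summable_geometric_of_lt_one (norm_nonneg q) hq).mul_left ‖a‖

lemma one_sub_mul_pow_ne_zero (ha : ‖a‖ < 1) (hq : ‖q‖ < 1) (n : ℕ) : 1 - a * q ^ n ≠ 0 := by
  have hlt : ‖a * q ^ n‖ < 1 := by
    rw [norm_mul, norm_pow]
    exact mul_lt_one_of_nonneg_of_lt_one_left (norm_nonneg a) ha (pow_le_one₀ (norm_nonneg q) hq.le)
  intro h
  rw [← sub_eq_zero.mp h, norm_one] at hlt
  exact hlt.false

lemma qPoch_eq_zero {n : ℕ} (h : a * q ^ n = 1) : qPoch a q = 0 :=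
  tprod_of_exists_eq_zero ⟨n, sub_eq_zero.mpr h.symm⟩

variable [CompleteSpace K]

lemma multipliable_one_sub_mul_pow (a : K) (hq : ‖q‖ < 1) :
    Multipliable fun n : ℕ ↦ 1 - a * q ^ n := by
  simpa only [sub_eq_add_neg] using multipliable_one_add_of_summable (summable_norm_mul_pow a hq)

lemma tendsto_prod_range_qPoch (a : K) (hq : ‖q‖ < 1) :
    Filter.Tendsto (fun N ↦ ∏ n ∈ Finset.range N, (1 - a * q ^ n)) Filter.atTop
      (nhds (qPoch a q)) :=
  (multipliable_one_sub_mul_pow a hq).tendsto_prod_tprod_nat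

lemma qPoch_ne_zero (ha : ‖a‖ < 1) (hq : ‖q‖ < 1) : qPoch a q ≠ 0 := by
  simpa only [qPoch, sub_eq_add_neg] using
    tprod_one_add_ne_zero_of_summable
      (fun n ↦ by simpa only [sub_eq_add_neg] using one_sub_mul_pow_ne_zero ha hq n)
      (summable_norm_mul_pow a hq)

lemma qPoch_eq_prod_range_mul (a : K) (hq : ‖q‖ < 1) (N : ℕ) :
    qPoch a q = (∏ n ∈ Finset.range N, (1 - a * q ^ n)) * qPoch (a * q ^ N) q := by
  have hshift (n : ℕ) : 1 - a * q ^ N * q ^ n = 1 - a * q ^ (n + N) := by ring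
  simp only [qPoch, hshift]
  refine (Multipliable.prod_mul_tprod_nat_mul' ?_).symm
  simpa only [hshift] using multipliable_one_sub_mul_pow (a * q ^ N) hq

lemma qPoch_eq_one_sub_mul (a : K) (hq : ‖q‖ < 1) : qPoch a q = (1 - a) * qPoch (a * q) q := by
  simpa using qPoch_eq_prod_range_mul a hq 1

lemma qPoch_eq_prod_qPoch_pow (a : K) (hq : ‖q‖ < 1) (k : ℕ) [NeZero k] :
    qPoch a q = ∏ i ∈ Finset.range k, qPoch (a * q ^ i) (q ^ k) := by
  obtain ⟨e, he⟩ : ∃ e : Fin k × ℕ ≃ ℕ, ∀ i m, e (i, m) = m * k + i :=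
    ⟨(Equiv.prodComm _ _).trans (Nat.divModEquiv k).symm, fun i m ↦ by simp [Nat.divModEquiv]⟩
  have hterm (i : Fin k) (m : ℕ) :
      1 - a * q ^ e (i, m) = 1 - a * q ^ (i : ℕ) * (q ^ k) ^ m := by
    rw [he, pow_add, pow_mul', mul_comm (_ ^ m), mul_assoc]
  have hm : Multipliable fun p : Fin k × ℕ ↦ 1 - a * q ^ e p :=
    (e.multipliable_iff (f := fun n ↦ 1 - a * q ^ n)).mpr (multipliable_one_sub_mul_pow a hq)
  rw [Finset.prod_range, qPoch, ← e.tprod_eq, hm.tprod_prod' fun i ↦ ?_, tprod_fintype]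
  · simp only [hterm, qPoch]
  · simpa only [hterm] using multipliable_one_sub_mul_pow _ (norm_pow_lt_one hq (NeZero.ne k))

lemma qPoch_mul_qPoch_neg (a : K) (hq : ‖q‖ < 1) :
    qPoch a q * qPoch (-a) q = qPoch (a ^ 2) (q ^ 2) := by
  simp only [qPoch]
  rw [← (multipliable_one_sub_mul_pow a hq).tprod_mul (multipliable_one_sub_mul_pow (-a) hq)]
  exact tprod_congr fun n ↦ by ring

lemma eulerFun_ne_zero (hq : ‖q‖ < 1) : eulerFun q ≠ 0 := qPoch_ne_zero hq hq

lemma eulerFun_pow_ne_zero (hq : ‖q‖ < 1) {n : ℕ} (hn : n ≠ 0) : eulerFun (q ^ n) ≠ 0 :=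
  eulerFun_ne_zero (norm_pow_lt_one hq hn)

lemma eulerFun_eq_mul_sq (hq : ‖q‖ < 1) : eulerFun q = qPoch q (q ^ 2) * eulerFun (q ^ 2) := by
  rw [eulerFun, qPoch_eq_prod_qPoch_pow q hq 2, Finset.prod_range_succ, Finset.prod_range_one,
    pow_zero, mul_one, pow_one, ← sq, eulerFun]

lemma qPoch_neg_self_mul_eulerFun (hq : ‖q‖ < 1) :
    qPoch (-q) q * eulerFun q = eulerFun (q ^ 2) := by
  rw [mul_comm, eulerFun, qPoch_mul_qPoch_neg q hq, eulerFun]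

end QPochhammer

section RootsOfUnity

variable {K : Type*} [NormedField K] {n p : ℕ} {ω q x : K}

lemma norm_eq_one_of_isPrimitiveRoot (hω : IsPrimitiveRoot ω n) (hn : 0 < n) : ‖ω‖ = 1 := by
  rw [← pow_left_inj₀ (norm_nonneg ω) zero_le_one hn.ne', ← norm_pow, hω.pow_eq_one, norm_one,
    one_pow]

lemma prod_range_one_sub_primitiveRoot_pow_mul (hω : IsPrimitiveRoot ω n) (hn : 0 < n) (a : K) :
    ∏ i ∈ Finset.range n, (1 - ω ^ i * a) = 1 - a ^ n := by
  simpa [Polynomial.eval_prod] using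
    (congrArg (Polynomial.eval 1) (X_pow_sub_C_eq_prod hω hn (rfl : a ^ n = a ^ n))).symm

lemma primitiveRoot_pow_mul_pow (hω : IsPrimitiveRoot ω n) (i : ℕ) (x : K) :
    (ω ^ i * x) ^ n = x ^ n := by
  rw [mul_pow, pow_right_comm, hω.pow_eq_one, one_pow, one_mul]

lemma norm_primitiveRoot_pow_mul (hω : IsPrimitiveRoot ω n) (hn : 0 < n) (i : ℕ) (x : K) :
    ‖ω ^ i * x‖ = ‖x‖ := by
  rw [norm_mul, norm_pow, norm_eq_one_of_isPrimitiveRoot hω hn, one_pow, one_mul]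

variable [CompleteSpace K]

lemma prod_range_qPoch_primitiveRoot_pow_mul (hω : IsPrimitiveRoot ω n) (hn : 0 < n) (a : K)
    (hq : ‖q‖ < 1) : ∏ i ∈ Finset.range n, qPoch (ω ^ i * a) q = qPoch (a ^ n) (q ^ n) := by
  simp only [qPoch]
  rw [← Multipliable.tprod_finsetProd fun i _ ↦ multipliable_one_sub_mul_pow (ω ^ i * a) hq]
  refine tprod_congr fun m ↦ ?_
  simp only [mul_assoc, prod_range_one_sub_primitiveRoot_pow_mul hω hn, mul_pow, pow_right_comm]

/-- Among the factors of `(y; y)_∞` with `y = ω ^ i x`, those whose exponent is divisible by `p`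
give `(x ^ p; x ^ p)_∞` for every `i`; a primitive root of unity merges the remaining residue
classes, over the `p` values of `i`, into the factors of `(x ^ p; x ^ p)_∞` of exponent prime to
`p`. -/
lemma prod_range_eulerFun_primitiveRoot_pow_mul (hp : p.Prime) (hω : IsPrimitiveRoot ω p)
    (hx : ‖x‖ < 1) :
    (∏ i ∈ Finset.range p, eulerFun (ω ^ i * x)) * eulerFun ((x ^ p) ^ p) =
      eulerFun (x ^ p) ^ (p + 1) := by
  have : NeZero p := ⟨hp.ne_zero⟩
  have hq : ‖x ^ p‖ < 1 := norm_pow_lt_one hx hp.ne_zero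
  obtain ⟨k, rfl⟩ : ∃ k, p = k + 1 := ⟨p - 1, by have := hp.pos; lia⟩
  set q := x ^ (k + 1) with hqx
  have hsplit (i : ℕ) : eulerFun (ω ^ i * x) =
      (∏ j ∈ Finset.range k, qPoch ((ω ^ (j + 1)) ^ i * x ^ (j + 1)) q) * eulerFun q := by
    have hpow : (ω ^ i * x) ^ (k + 1) = q := primitiveRoot_pow_mul_pow hω i x
    have hnorm : ‖ω ^ i * x‖ < 1 := (norm_primitiveRoot_pow_mul hω hp.pos i x).trans_lt hx
    rw [eulerFun, qPoch_eq_prod_qPoch_pow _ hnorm (k + 1), hpow, Finset.prod_range_succ,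
      ← pow_succ', hpow, eulerFun]
    congr 1
    refine Finset.prod_congr rfl fun j _ ↦ ?_
    rw [← pow_succ', mul_pow, pow_right_comm]
  have horbit {j : ℕ} (hj : j ∈ Finset.range k) :
      ∏ i ∈ Finset.range (k + 1), qPoch ((ω ^ (j + 1)) ^ i * x ^ (j + 1)) q =
        qPoch (q * q ^ j) (q ^ (k + 1)) := by
    have hcop : (j + 1).Coprime (k + 1) :=
      (hp.coprime_iff_not_dvd.mpr (Nat.not_dvd_of_pos_of_lt j.succ_pos
        (by simpa using hj))).symm
    rw [prod_range_qPoch_primitiveRoot_pow_mul (hω.pow_of_coprime _ hcop) k.succ_pos _ hq,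
      pow_right_comm, ← pow_succ', hqx]
  have hEuler : eulerFun q =
      (∏ j ∈ Finset.range k, qPoch (q * q ^ j) (q ^ (k + 1))) * eulerFun (q ^ (k + 1)) := by
    rw [eulerFun, qPoch_eq_prod_qPoch_pow q hq (k + 1), Finset.prod_range_succ, ← pow_succ',
      eulerFun]
  simp only [hsplit, Finset.prod_mul_distrib, Finset.prod_const, Finset.card_range]
  rw [Finset.prod_comm, Finset.prod_congr rfl fun j hj ↦ horbit hj, mul_right_comm, ← hEuler,
    ← pow_succ']

end RootsOfUnity

section Theta

/-- The general term `z ^ n q ^ (n (n - 1) / 2)` of the theta series. The integer division is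
exact. -/
noncomputable def thetaTerm {K : Type*} [NormedField K] (z q : K) (n : ℤ) : K :=
  z ^ n * q ^ (n * (n - 1) / 2)

/-- The theta series `∑_{n ∈ ℤ} z ^ n q ^ (n (n - 1) / 2)`, which is Ramanujan's `f(z, q / z)`. -/
noncomputable def thetaSeries {K : Type*} [NormedField K] (z q : K) : K := ∑' n : ℤ, thetaTerm z q n

variable {K : Type*} [NormedField K] {z w q : K}

lemma thetaTerm_of_mul_sub_one_eq {n t : ℤ} (h : n * (n - 1) = 2 * t) :
    thetaTerm z q n = z ^ n * q ^ t := by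
  rw [thetaTerm, h, Int.mul_ediv_cancel_left _ two_ne_zero]

lemma thetaTerm_ne_zero (hz : z ≠ 0) (hq : q ≠ 0) (n : ℤ) : thetaTerm z q n ≠ 0 :=
  mul_ne_zero (zpow_ne_zero _ hz) (zpow_ne_zero _ hq)

lemma thetaTerm_add_one (hz : z ≠ 0) (hq : q ≠ 0) (n : ℤ) :
    thetaTerm z q (n + 1) = z * q ^ n * thetaTerm z q n := by
  obtain ⟨t, ht⟩ := (Int.even_mul_pred_self n).two_dvd
  rw [thetaTerm_of_mul_sub_one_eq ht,
    thetaTerm_of_mul_sub_one_eq (t := n + t) (by linear_combination ht), zpow_add_one₀ hz,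
    zpow_add₀ hq]
  ring

lemma thetaTerm_neg (hq : q ≠ 0) (n : ℤ) : thetaTerm z q (-n) = thetaTerm (q / z) q n := by
  obtain ⟨t, ht⟩ := (Int.even_mul_pred_self n).two_dvd
  rw [thetaTerm_of_mul_sub_one_eq ht,
    thetaTerm_of_mul_sub_one_eq (t := n + t) (by linear_combination ht), div_zpow, zpow_add₀ hq,
    zpow_neg]
  ring

lemma thetaTerm_mul_add (hz : z ≠ 0) (hq : q ≠ 0) (k r : ℕ) (m : ℤ) :
    thetaTerm z q (k * m + r) =
      z ^ r * q ^ r.choose 2 * thetaTerm (z ^ k * q ^ (k * r + k.choose 2)) (q ^ k ^ 2) m := by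
  have htri (j : ℕ) : (j : ℤ) * (j - 1) = 2 * j.choose 2 := by
    induction j with
    | zero => simp
    | succ j ih =>
      rw [Nat.choose_succ_succ', Nat.choose_one_right]
      push_cast
      linear_combination ih
  obtain ⟨t, ht⟩ := (Int.even_mul_pred_self m).two_dvd
  rw [thetaTerm_of_mul_sub_one_eq ht, thetaTerm_of_mul_sub_one_eq
    (t := r.choose 2 + ((k * r + k.choose 2) * m + k ^ 2 * t))
    (by linear_combination k ^ 2 * ht + htri r + m * htri k)]
  simp only [mul_zpow, ← zpow_natCast, ← zpow_mul]
  push_cast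
  rw [zpow_add₀ hz, zpow_add₀ hq, zpow_add₀ hq]
  ring

lemma summable_norm_thetaTerm_natCast (hz : z ≠ 0) (hq0 : q ≠ 0) (hq : ‖q‖ < 1) :
    Summable fun n : ℕ ↦ ‖thetaTerm z q n‖ := by
  have hne (n : ℕ) : ‖thetaTerm z q n‖ ≠ 0 := norm_ne_zero_iff.mpr (thetaTerm_ne_zero hz hq0 n)
  refine summable_of_ratio_test_tendsto_lt_one zero_lt_one (.of_forall hne) ?_
  have hratio (n : ℕ) :
      ‖‖thetaTerm z q (n + 1 : ℕ)‖‖ / ‖‖thetaTerm z q n‖‖ = ‖z‖ * ‖q‖ ^ n := by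
    rw [norm_norm, norm_norm, div_eq_iff (hne n), Nat.cast_succ, thetaTerm_add_one hz hq0,
      zpow_natCast, norm_mul, norm_mul, norm_pow]
  simp only [hratio]
  simpa using (tendsto_pow_atTop_nhds_zero_of_lt_one (norm_nonneg q) hq).const_mul ‖z‖

lemma summable_norm_thetaTerm (hz : z ≠ 0) (hq0 : q ≠ 0) (hq : ‖q‖ < 1) :
    Summable fun n : ℤ ↦ ‖thetaTerm z q n‖ := by
  refine .of_nat_of_neg (summable_norm_thetaTerm_natCast hz hq0 hq) ?_
  simpa only [thetaTerm_neg hq0] using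
    summable_norm_thetaTerm_natCast (div_ne_zero hq0 hz) hq0 hq

lemma mul_thetaSeries_mul_right (hz : z ≠ 0) (hq : q ≠ 0) :
    z * thetaSeries (z * q) q = thetaSeries z q := by
  rw [thetaSeries, thetaSeries, ← tsum_mul_left, ← (Equiv.addRight (1 : ℤ)).tsum_eq (thetaTerm z q)]
  refine tsum_congr fun n ↦ ?_
  rw [Equiv.coe_addRight, thetaTerm_add_one hz hq, thetaTerm, thetaTerm, mul_zpow]
  ring

lemma thetaSeries_eq_thetaSeries_of_mul_eq (hzw : z * w = q) (hq : q ≠ 0) :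
    thetaSeries z q = thetaSeries w q := by
  obtain rfl : w = q / z :=
    eq_div_of_mul_eq (left_ne_zero_of_mul (hzw ▸ hq)) (mul_comm z w ▸ hzw)
  rw [thetaSeries, thetaSeries, ← (Equiv.neg ℤ).tsum_eq (thetaTerm z q)]
  simp only [Equiv.neg_apply, thetaTerm_neg hq]

variable [CompleteSpace K]

lemma thetaSeries_eq_sum_dissection (hz : z ≠ 0) (hq0 : q ≠ 0) (hq : ‖q‖ < 1) (k : ℕ) [NeZero k] :
    thetaSeries z q = ∑ r ∈ Finset.range k,
      z ^ r * q ^ r.choose 2 * thetaSeries (z ^ k * q ^ (k * r + k.choose 2)) (q ^ k ^ 2) := by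
  obtain ⟨e, he⟩ : ∃ e : Fin k × ℤ ≃ ℤ, ∀ r m, e (r, m) = k * m + (r : ℕ) :=
    ⟨(Equiv.prodComm _ _).trans (Int.divModEquiv k).symm, fun r m ↦ by
      simp [Int.divModEquiv, mul_comm]⟩
  have hs : Summable fun p : Fin k × ℤ ↦ thetaTerm z q (e p) :=
    e.summable_iff.mpr (summable_norm_thetaTerm hz hq0 hq).of_norm
  rw [Finset.sum_range, thetaSeries, ← e.tsum_eq, hs.tsum_prod, tsum_fintype]
  simp only [he, thetaTerm_mul_add hz hq0, tsum_mul_left, thetaSeries]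

end Theta

section TripleProduct

/-- The tail `(q ^ (m + 1); q)_∞ = (q; q)_∞ / (q; q)_m` of the Euler product. Unlike `1 / (q; q)_m`
it makes sense for every integer `m`, and it vanishes for `m < 0`. -/
noncomputable def qTail {K : Type*} [NormedField K] (q : K) (m : ℤ) : K := qPoch (q ^ (m + 1)) q

/-- The `n`-th term of the Laurent expansion in `z` of the product of the `M` factors `1 + z q ^ i`
and the `N` factors `1 + (q / z) q ^ i`, multiplied by `(q; q)_∞ qTail q (M + N)` so that no
division is needed. It vanishes unless `-N ≤ n ≤ M`. -/
noncomputable def finTripleTerm {K : Type*} [NormedField K] (z q : K) (M N : ℕ) (n : ℤ) : K :=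
  qTail q (N + n) * qTail q (M - n) * thetaTerm z q n

variable {K : Type*} [NormedField K] {z w q : K} {M N : ℕ}

lemma qTail_of_neg (hq : q ≠ 0) {m : ℤ} (hm : m < 0) : qTail q m = 0 := by
  refine qPoch_eq_zero (n := (-(m + 1)).toNat) ?_
  rw [← zpow_natCast, ← zpow_add₀ hq, Int.toNat_of_nonneg (by lia), add_neg_cancel, zpow_zero]

lemma qTail_zero (q : K) : qTail q 0 = eulerFun q := by
  rw [qTail, zero_add, zpow_one, eulerFun]

lemma finTripleTerm_neg (hq : q ≠ 0) (n : ℤ) :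
    finTripleTerm z q M N (-n) = finTripleTerm (q / z) q N M n := by
  rw [finTripleTerm, finTripleTerm, thetaTerm_neg hq, sub_neg_eq_add, ← sub_eq_add_neg]
  ring

lemma hasSum_finTripleTerm_zero (z : K) (hq : q ≠ 0) :
    HasSum (finTripleTerm z q 0 0) (eulerFun q * eulerFun q) := by
  convert hasSum_single (0 : ℤ) fun n hn ↦ ?_ using 1
  · simp [finTripleTerm, thetaTerm, qTail_zero]
  · rcases hn.lt_or_gt with hn | hn
    · simp [finTripleTerm, qTail_of_neg hq, hn]
    · simp [finTripleTerm, qTail_of_neg hq, hn]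

variable [CompleteSpace K]

lemma qTail_sub_one (hq0 : q ≠ 0) (hq : ‖q‖ < 1) (m : ℤ) :
    qTail q (m - 1) = (1 - q ^ m) * qTail q m := by
  rw [qTail, sub_add_cancel, qPoch_eq_one_sub_mul _ hq, ← zpow_add_one₀ hq0, qTail]

lemma tendsto_qTail (hq : ‖q‖ < 1) : Filter.Tendsto (qTail q) Filter.atTop (nhds 1) := by
  have hE := eulerFun_ne_zero hq
  have hnat : Filter.Tendsto (fun N : ℕ ↦ qTail q N) Filter.atTop (nhds 1) := by
    rw [← div_self hE]
    refine (tendsto_const_nhds.div (tendsto_prod_range_qPoch q hq) hE).congr fun N ↦ ?_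
    rw [eulerFun, qPoch_eq_prod_range_mul q hq N, ← pow_succ', Pi.div_apply, mul_div_cancel_left₀ _
      (Finset.prod_ne_zero_iff.mpr fun n _ ↦ one_sub_mul_pow_ne_zero hq hq n), qTail,
      ← Nat.cast_succ, zpow_natCast]
  have htoNat : Filter.Tendsto Int.toNat Filter.atTop Filter.atTop :=
    Filter.tendsto_atTop_atTop.mpr fun b ↦ ⟨b, fun m hm ↦ by lia⟩
  refine (hnat.comp htoNat).congr' ?_
  filter_upwards [Filter.eventually_ge_atTop 0] with m hm
  rw [Function.comp_apply, Int.toNat_of_nonneg hm]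

lemma exists_norm_qTail_le (hq0 : q ≠ 0) (hq : ‖q‖ < 1) : ∃ B, ∀ m, ‖qTail q m‖ ≤ B := by
  obtain ⟨B, hB⟩ :=
    ((tendsto_qTail hq).comp tendsto_natCast_atTop_atTop).norm.bddAbove_range
  refine ⟨B, fun m ↦ ?_⟩
  rcases le_or_gt 0 m with hm | hm
  · lift m to ℕ using hm
    exact hB ⟨m, rfl⟩
  · rw [qTail_of_neg hq0 hm, norm_zero]
    exact (norm_nonneg _).trans (hB ⟨0, rfl⟩)

/-- A Pascal rule: up to normalization, it compares coefficients of `z ^ n` when the finite product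
is multiplied by `1 + z q ^ M`. -/
lemma finTripleTerm_succ_left (hz : z ≠ 0) (hq0 : q ≠ 0) (hq : ‖q‖ < 1) (n : ℤ) :
    (1 - q * q ^ (M + N)) * finTripleTerm z q (M + 1) N n =
      finTripleTerm z q M N n + z * q ^ M * finTripleTerm z q M N (n - 1) := by
  have hM : qTail q (M - n) = (1 - q ^ (M + 1 - n : ℤ)) * qTail q (M + 1 - n) := by
    rw [← qTail_sub_one hq0 hq]; ring_nf
  have hN : qTail q (N + (n - 1)) = (1 - q ^ (N + n : ℤ)) * qTail q (N + n) := by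
    rw [← qTail_sub_one hq0 hq]; ring_nf
  have hT : q ^ (M + 1 - n : ℤ) * thetaTerm z q n = z * q ^ M * thetaTerm z q (n - 1) := by
    have hadd : q ^ (M + 1 - n : ℤ) * q ^ (n - 1) = q ^ M := by
      rw [← zpow_add₀ hq0, ← zpow_natCast]
      ring_nf
    have hsucc := thetaTerm_add_one hz hq0 (n - 1)
    rw [sub_add_cancel] at hsucc
    linear_combination q ^ (M + 1 - n : ℤ) * hsucc + z * thetaTerm z q (n - 1) * hadd
  have hpow : q * q ^ (M + N) = q ^ (M + 1 - n : ℤ) * q ^ (N + n : ℤ) := by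
    rw [← zpow_add₀ hq0, ← pow_succ', ← zpow_natCast]
    push_cast
    ring_nf
  rw [finTripleTerm, finTripleTerm, finTripleTerm, hM, hN, hpow, sub_sub_eq_add_sub]
  push_cast
  linear_combination (1 - q ^ (N + n : ℤ)) * qTail q (N + n) * qTail q (M + 1 - n) * hT

lemma hasSum_finTripleTerm_succ_left (hz : z ≠ 0) (hq0 : q ≠ 0) (hq : ‖q‖ < 1) {P : K}
    (h : HasSum (finTripleTerm z q M N) (eulerFun q * qTail q (M + N : ℕ) * P)) :
    HasSum (finTripleTerm z q (M + 1) N)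
      (eulerFun q * qTail q (M + 1 + N : ℕ) * (P * (1 - -z * q ^ M))) := by
  have hne : 1 - q * q ^ (M + N) ≠ 0 := one_sub_mul_pow_ne_zero hq hq _
  have htail : qTail q (M + N : ℕ) = (1 - q * q ^ (M + N)) * qTail q (M + 1 + N : ℕ) := by
    have := qTail_sub_one hq0 hq (M + 1 + N : ℕ)
    rw [zpow_natCast] at this
    rw [← pow_succ', show M + N + 1 = M + 1 + N by ring, ← this]
    push_cast
    ring_nf
  have hsum := h.add (((Equiv.subRight (1 : ℤ)).hasSum_iff.mpr h).mul_left (z * q ^ M))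
  rw [← hasSum_mul_left_iff hne]
  convert hsum using 1
  · exact funext fun n ↦ finTripleTerm_succ_left hz hq0 hq n
  · rw [htail]
    ring

lemma hasSum_finTripleTerm (hz : z ≠ 0) (hq0 : q ≠ 0) (hq : ‖q‖ < 1) (M N : ℕ) :
    HasSum (finTripleTerm z q M N) (eulerFun q * qTail q (M + N : ℕ) *
      ((∏ i ∈ Finset.range N, (1 - -(q / z) * q ^ i)) *
        ∏ i ∈ Finset.range M, (1 - -z * q ^ i))) := by
  -- The symmetry `z ↦ q / z`, `n ↦ -n` turns adding factors in `q / z` into adding factors in `z`.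
  have grow {w P : K} {N : ℕ} (hw : w ≠ 0)
      (h : HasSum (finTripleTerm w q 0 N) (eulerFun q * qTail q N * P)) (M : ℕ) :
      HasSum (finTripleTerm w q M N) (eulerFun q * qTail q (M + N : ℕ) *
        (P * ∏ i ∈ Finset.range M, (1 - -w * q ^ i))) := by
    induction M with
    | zero => simpa using h
    | succ M ih =>
      rw [Finset.prod_range_succ, ← mul_assoc P]
      exact hasSum_finTripleTerm_succ_left hw hq0 hq ih
  have hbase : HasSum (finTripleTerm (q / z) q 0 0) (eulerFun q * qTail q (0 : ℕ) * 1) := by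
    simpa [qTail_zero] using hasSum_finTripleTerm_zero (q / z) hq0
  refine grow hz ?_ M
  have hflip : finTripleTerm z q 0 N ∘ Equiv.neg ℤ = finTripleTerm (q / z) q N 0 :=
    funext (finTripleTerm_neg hq0)
  rw [← (Equiv.neg ℤ).hasSum_iff, hflip]
  simpa using grow (div_ne_zero hq0 hz) hbase N

theorem jacobi_tripleProduct (hzw : z * w = q) (hq0 : q ≠ 0) (hq : ‖q‖ < 1) :
    thetaSeries z q = qPoch (-z) q * qPoch (-w) q * eulerFun q := by
  have hz : z ≠ 0 := left_ne_zero_of_mul (hzw ▸ hq0)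
  obtain rfl : w = q / z := eq_div_of_mul_eq hz (mul_comm z w ▸ hzw)
  have htail (n : ℤ) : Filter.Tendsto (fun N : ℕ ↦ qTail q (N + n)) Filter.atTop (nhds 1) :=
    (tendsto_qTail hq).comp
      (Filter.tendsto_atTop_add_const_right _ n tendsto_natCast_atTop_atTop)
  have hterm (n : ℤ) : Filter.Tendsto (fun N : ℕ ↦ finTripleTerm z q N N n) Filter.atTop
      (nhds (thetaTerm z q n)) := by
    simpa [finTripleTerm, sub_eq_add_neg] using ((htail n).mul (htail (-n))).mul_const _
  obtain ⟨B, hB⟩ := exists_norm_qTail_le hq0 hq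
  have hbound (N : ℕ) (n : ℤ) : ‖finTripleTerm z q N N n‖ ≤ B * B * ‖thetaTerm z q n‖ := by
    have hB0 := (norm_nonneg _).trans (hB 0)
    rw [finTripleTerm, norm_mul, norm_mul]
    gcongr <;> exact hB _
  have hseries : Filter.Tendsto (fun N ↦ ∑' n, finTripleTerm z q N N n) Filter.atTop
      (nhds (thetaSeries z q)) :=
    tendsto_tsum_of_dominated_convergence ((summable_norm_thetaTerm hz hq0 hq).mul_left _)
      hterm (.of_forall hbound)
  have hdiag : Filter.Tendsto (fun N : ℕ ↦ qTail q (N + N : ℕ)) Filter.atTop (nhds 1) :=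
    (tendsto_qTail hq).comp (tendsto_natCast_atTop_atTop.comp
      (Filter.tendsto_id.atTop_add_atTop Filter.tendsto_id))
  have hprod := (hdiag.const_mul (eulerFun q)).mul
    ((tendsto_prod_range_qPoch (-(q / z)) hq).mul (tendsto_prod_range_qPoch (-z) hq))
  rw [tendsto_nhds_unique hseries
    (hprod.congr fun N ↦ (hasSum_finTripleTerm hz hq0 hq N N).tsum_eq.symm)]
  ring

end TripleProduct

section CubicIdentities

/-- The cubic continued fraction without its leading power: `c(τ) = q ^ (1 / 3) cubicProduct q`. -/
noncomputable def cubicProduct {K : Type*} [NormedField K] (q : K) : K :=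
  qPoch q (q ^ 6) * qPoch (q ^ 5) (q ^ 6) / qPoch (q ^ 3) (q ^ 6) ^ 2

variable {K : Type*} [NormedField K] [CompleteSpace K] {ω x q : K}

lemma qPoch_pow_three_pow_six_ne_zero (hq : ‖q‖ < 1) : qPoch (q ^ 3) (q ^ 6) ≠ 0 :=
  qPoch_ne_zero (norm_pow_lt_one hq three_ne_zero) (norm_pow_lt_one hq (by norm_num))

lemma cubicProduct_mul_eulerFun (hq : ‖q‖ < 1) :
    cubicProduct q * (eulerFun (q ^ 2) * eulerFun (q ^ 3) ^ 3) =
      eulerFun q * eulerFun (q ^ 6) ^ 3 := by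
  have hthree := eulerFun_eq_mul_sq (norm_pow_lt_one hq three_ne_zero)
  have hsplit : qPoch q (q ^ 2) =
      qPoch q (q ^ 6) * qPoch (q ^ 3) (q ^ 6) * qPoch (q ^ 5) (q ^ 6) := by
    rw [qPoch_eq_prod_qPoch_pow q (norm_pow_lt_one hq two_ne_zero) 3]
    simp only [Finset.prod_range_succ, Finset.prod_range_zero]
    ring_nf
  rw [← pow_mul] at hthree
  have hne := qPoch_pow_three_pow_six_ne_zero hq
  rw [cubicProduct, hthree, eulerFun_eq_mul_sq hq, hsplit]
  field_simp

/-- Here `thetaSeries (-x) (x ^ 2)` is `φ(-x)`. -/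
lemma thetaSeries_neg_sq_mul_eulerFun (hx0 : x ≠ 0) (hx : ‖x‖ < 1) :
    thetaSeries (-x) (x ^ 2) * eulerFun (x ^ 2) = eulerFun x ^ 2 := by
  rw [jacobi_tripleProduct (w := -x) (by ring) (pow_ne_zero 2 hx0)
    (norm_pow_lt_one hx two_ne_zero), eulerFun_eq_mul_sq hx, neg_neg]
  ring

/-- Here `thetaSeries 1 x` is `2ψ(x)`. -/
lemma thetaSeries_one_mul_eulerFun (hx0 : x ≠ 0) (hx : ‖x‖ < 1) :
    thetaSeries 1 x * eulerFun x = 2 * eulerFun (x ^ 2) ^ 2 := by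
  rw [jacobi_tripleProduct (one_mul x) hx0 hx, qPoch_eq_one_sub_mul (-1) hx, neg_one_mul,
    ← qPoch_neg_self_mul_eulerFun hx]
  ring

lemma thetaSeries_neg_pow_six (hq0 : q ≠ 0) (hq : ‖q‖ < 1) :
    thetaSeries (-q) (q ^ 6) = cubicProduct q * thetaSeries (-q ^ 3) (q ^ 6) := by
  have hne := qPoch_pow_three_pow_six_ne_zero hq
  have hq6 := norm_pow_lt_one hq (n := 6) (by norm_num)
  rw [jacobi_tripleProduct (w := -q ^ 5) (by ring) (pow_ne_zero 6 hq0) hq6,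
    jacobi_tripleProduct (w := -q ^ 3) (by ring) (pow_ne_zero 6 hq0) hq6,
    cubicProduct, neg_neg, neg_neg, neg_neg]
  field_simp

lemma thetaSeries_pow_three_mul_eulerFun (hq0 : q ≠ 0) (hq : ‖q‖ < 1) :
    thetaSeries q (q ^ 3) * (eulerFun q * eulerFun (q ^ 6)) =
      eulerFun (q ^ 2) * eulerFun (q ^ 3) ^ 2 := by
  have hq3 := norm_pow_lt_one hq three_ne_zero
  have hsplit : qPoch (-q) q =
      qPoch (-q) (q ^ 3) * qPoch (-q ^ 2) (q ^ 3) * qPoch (-q ^ 3) (q ^ 3) := by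
    rw [qPoch_eq_prod_qPoch_pow (-q) hq 3]
    simp only [Finset.prod_range_succ, Finset.prod_range_zero]
    ring_nf
  have hE3 := qPoch_neg_self_mul_eulerFun hq3
  rw [← pow_mul] at hE3
  rw [jacobi_tripleProduct (w := q ^ 2) (by ring) (pow_ne_zero 3 hq0) hq3,
    ← qPoch_neg_self_mul_eulerFun hq, hsplit, ← hE3]
  ring

lemma two_mul_thetaSeries_pow_three_mul_cubicProduct (hq0 : q ≠ 0) (hq : ‖q‖ < 1) :
    2 * thetaSeries q (q ^ 3) * cubicProduct q = thetaSeries 1 (q ^ 3) := by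
  have hone :=
    thetaSeries_one_mul_eulerFun (pow_ne_zero 3 hq0) (norm_pow_lt_one hq three_ne_zero)
  rw [← pow_mul] at hone
  have hne : eulerFun q * eulerFun (q ^ 3) * eulerFun (q ^ 6) ≠ 0 :=
    mul_ne_zero (mul_ne_zero (eulerFun_ne_zero hq) (eulerFun_pow_ne_zero hq three_ne_zero))
      (eulerFun_pow_ne_zero hq (by norm_num))
  refine mul_left_cancel₀ hne ?_
  linear_combination 2 * eulerFun (q ^ 3) * cubicProduct q *
      thetaSeries_pow_three_mul_eulerFun hq0 hq + 2 * cubicProduct_mul_eulerFun hq -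
    eulerFun q * eulerFun (q ^ 6) * hone

lemma thetaSeries_three_dissection {z q : K} (hz : z ≠ 0) (hq0 : q ≠ 0) (hq : ‖q‖ < 1) :
    z * thetaSeries z q = z * thetaSeries (z ^ 3 * q ^ 3) (q ^ 9) +
      z ^ 2 * thetaSeries (z ^ 3 * q ^ 6) (q ^ 9) + q * thetaSeries (z ^ 3) (q ^ 9) := by
  rw [← mul_thetaSeries_mul_right (pow_ne_zero 3 hz) (pow_ne_zero 9 hq0),
    thetaSeries_eq_sum_dissection hz hq0 hq 3]
  simp only [Finset.sum_range_succ, Finset.sum_range_zero, Nat.choose, Nat.reduceMul, Nat.reduceAdd,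
    Nat.reducePow]
  ring

lemma thetaSeries_neg_sq_dissection (hxq : x ^ 3 = q) (hx0 : x ≠ 0) (hx : ‖x‖ < 1) :
    thetaSeries (-x) (x ^ 2) =
      thetaSeries (-q ^ 3) (q ^ 6) * (1 - 2 * (x * cubicProduct q)) := by
  subst hxq
  have hq0 := pow_ne_zero 3 hx0
  have h := thetaSeries_three_dissection (neg_ne_zero.mpr hx0) (pow_ne_zero 2 hx0)
    (norm_pow_lt_one hx two_ne_zero)
  rw [show (-x) ^ 3 * (x ^ 2) ^ 3 = -(x ^ 3) ^ 3 by ring,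
    show (-x) ^ 3 * (x ^ 2) ^ 6 = -(x ^ 3) ^ 5 by ring, show (-x) ^ 3 = -x ^ 3 by ring,
    show (x ^ 2) ^ 9 = (x ^ 3) ^ 6 by ring, thetaSeries_eq_thetaSeries_of_mul_eq
      (z := -(x ^ 3) ^ 5) (w := -x ^ 3) (by ring) (pow_ne_zero 6 hq0),
    thetaSeries_neg_pow_six hq0 (norm_pow_lt_one hx three_ne_zero)] at h
  refine mul_left_cancel₀ (neg_ne_zero.mpr hx0) ?_
  linear_combination h

lemma thetaSeries_one_dissection (hxq : x ^ 3 = q) (hx0 : x ≠ 0) (hx : ‖x‖ < 1) :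
    thetaSeries 1 x * cubicProduct q = thetaSeries 1 (q ^ 3) * (1 + x * cubicProduct q) := by
  subst hxq
  have hq0 := pow_ne_zero 3 hx0
  have hq := norm_pow_lt_one hx three_ne_zero
  have hsymm : thetaSeries ((x ^ 3) ^ 2) ((x ^ 3) ^ 3) = thetaSeries (x ^ 3) ((x ^ 3) ^ 3) :=
    thetaSeries_eq_thetaSeries_of_mul_eq (by ring) (pow_ne_zero 3 hq0)
  have h := thetaSeries_three_dissection one_ne_zero hx0 hx
  rw [one_pow, one_pow, one_mul, one_mul, one_mul, one_mul, one_mul,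
    show x ^ 6 = (x ^ 3) ^ 2 by ring, show x ^ 9 = (x ^ 3) ^ 3 by ring, hsymm] at h
  linear_combination cubicProduct (x ^ 3) * h +
    two_mul_thetaSeries_pow_three_mul_cubicProduct hq0 hq

lemma eulerFun_sq_mul_eq_one_sub_cubicProduct (hxq : x ^ 3 = q) (hx0 : x ≠ 0) (hx : ‖x‖ < 1) :
    eulerFun x ^ 2 * eulerFun (q ^ 6) =
      eulerFun (q ^ 3) ^ 2 * eulerFun (x ^ 2) * (1 - 2 * (x * cubicProduct q)) := by
  have hq0 : q ≠ 0 := hxq ▸ pow_ne_zero 3 hx0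
  have hq : ‖q‖ < 1 := hxq ▸ norm_pow_lt_one hx three_ne_zero
  have h := thetaSeries_neg_sq_mul_eulerFun (pow_ne_zero 3 hq0) (norm_pow_lt_one hq three_ne_zero)
  rw [← pow_mul] at h
  rw [← thetaSeries_neg_sq_mul_eulerFun hx0 hx, ← h, thetaSeries_neg_sq_dissection hxq hx0 hx]
  ring

lemma eulerFun_sq_sq_mul_cubicProduct_eq_one_add [NeZero (2 : K)] (hxq : x ^ 3 = q) (hx0 : x ≠ 0)
    (hx : ‖x‖ < 1) :
    eulerFun (x ^ 2) ^ 2 * eulerFun (q ^ 3) * cubicProduct q =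
      eulerFun x * eulerFun (q ^ 6) ^ 2 * (1 + x * cubicProduct q) := by
  have hq0 : q ≠ 0 := hxq ▸ pow_ne_zero 3 hx0
  have hq : ‖q‖ < 1 := hxq ▸ norm_pow_lt_one hx three_ne_zero
  have h := thetaSeries_one_mul_eulerFun (pow_ne_zero 3 hq0) (norm_pow_lt_one hq three_ne_zero)
  rw [← pow_mul] at h
  refine mul_left_cancel₀ (two_ne_zero' K) ?_
  linear_combination eulerFun x * eulerFun (q ^ 3) * thetaSeries_one_dissection hxq hx0 hx -
    eulerFun (q ^ 3) * cubicProduct q * thetaSeries_one_mul_eulerFun hx0 hx +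
    eulerFun x * (1 + x * cubicProduct q) * h

lemma prod_range_eulerFun_cubeRoots (hω : IsPrimitiveRoot ω 3) (hxq : x ^ 3 = q) (hx : ‖x‖ < 1) :
    (∏ i ∈ Finset.range 3, eulerFun (ω ^ i * x)) * eulerFun (q ^ 3) = eulerFun q ^ 4 := by
  subst hxq
  exact prod_range_eulerFun_primitiveRoot_pow_mul Nat.prime_three hω hx

lemma prod_range_eulerFun_sq_cubeRoots (hω : IsPrimitiveRoot ω 3) (hxq : x ^ 3 = q) (hx : ‖x‖ < 1) :
    (∏ i ∈ Finset.range 3, eulerFun ((ω ^ i * x) ^ 2)) * eulerFun (q ^ 6) =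
      eulerFun (q ^ 2) ^ 4 := by
  have hx2q2 : (x ^ 2) ^ 3 = q ^ 2 := by rw [← hxq, pow_right_comm]
  have hω2 : IsPrimitiveRoot (ω ^ 2) 3 := hω.pow_of_coprime 2 (by norm_num)
  simpa only [mul_pow, pow_right_comm ω, ← pow_mul q] using
    prod_range_eulerFun_cubeRoots hω2 hx2q2 (norm_pow_lt_one hx two_ne_zero)

/-- In Ramanujan's notation, `1 - 8 c³ = φ(-q)⁴ / φ(-q³)⁴`. -/
lemma one_sub_eight_mul_cubicProduct (hω : IsPrimitiveRoot ω 3) (hxq : x ^ 3 = q) (hx0 : x ≠ 0)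
    (hx : ‖x‖ < 1) :
    (1 - 8 * (q * cubicProduct q ^ 3)) * (eulerFun (q ^ 2) ^ 4 * eulerFun (q ^ 3) ^ 8) =
      eulerFun q ^ 8 * eulerFun (q ^ 6) ^ 4 := by
  have hfactor : ∏ i ∈ Finset.range 3, (1 - 2 * (ω ^ i * x * cubicProduct q)) =
      1 - 8 * (q * cubicProduct q ^ 3) := by
    have h := prod_range_one_sub_primitiveRoot_pow_mul hω three_pos (2 * x * cubicProduct q)
    rw [mul_pow, mul_pow, hxq] at h
    convert h using 2
    · ring
    · ring
  have hprod := Finset.prod_congr rfl fun i (_ : i ∈ Finset.range 3) ↦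
    eulerFun_sq_mul_eq_one_sub_cubicProduct
      ((primitiveRoot_pow_mul_pow hω i x).trans hxq)
      (mul_ne_zero (pow_ne_zero i (hω.ne_zero three_ne_zero)) hx0)
      ((norm_primitiveRoot_pow_mul hω three_pos i x).trans_lt hx)
  simp only [Finset.prod_mul_distrib, Finset.prod_pow, Finset.prod_const, Finset.card_range,
    hfactor] at hprod
  have hE := prod_range_eulerFun_cubeRoots hω hxq hx
  have hE2 := prod_range_eulerFun_sq_cubeRoots hω hxq hx
  rw [show eulerFun q ^ 8 = (eulerFun q ^ 4) ^ 2 by ring, ← hE, ← hE2]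
  linear_combination -(eulerFun (q ^ 3) ^ 2 * eulerFun (q ^ 6)) * hprod

/-- In Ramanujan's notation, `1 + c³ = c³ ψ(q)⁴ / (q ψ(q³)⁴)`. -/
lemma one_add_cubicProduct [NeZero (2 : K)] (hω : IsPrimitiveRoot ω 3) (hxq : x ^ 3 = q)
    (hx0 : x ≠ 0) (hx : ‖x‖ < 1) :
    (1 + q * cubicProduct q ^ 3) * (eulerFun (q ^ 6) ^ 8 * eulerFun q ^ 4) =
      cubicProduct q ^ 3 * (eulerFun (q ^ 2) ^ 8 * eulerFun (q ^ 3) ^ 4) := by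
  have hfactor : ∏ i ∈ Finset.range 3, (1 + ω ^ i * x * cubicProduct q) =
      1 + q * cubicProduct q ^ 3 := by
    have h := prod_range_one_sub_primitiveRoot_pow_mul hω three_pos (-(x * cubicProduct q))
    rw [neg_pow, mul_pow, hxq] at h
    convert h using 2
    · ring
    · ring
  have hprod := Finset.prod_congr rfl fun i (_ : i ∈ Finset.range 3) ↦
    eulerFun_sq_sq_mul_cubicProduct_eq_one_add
      ((primitiveRoot_pow_mul_pow hω i x).trans hxq)
      (mul_ne_zero (pow_ne_zero i (hω.ne_zero three_ne_zero)) hx0)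
      ((norm_primitiveRoot_pow_mul hω three_pos i x).trans_lt hx)
  simp only [Finset.prod_mul_distrib, Finset.prod_pow, Finset.prod_const, Finset.card_range,
    hfactor] at hprod
  have hE := prod_range_eulerFun_cubeRoots hω hxq hx
  have hE2 := prod_range_eulerFun_sq_cubeRoots hω hxq hx
  rw [show eulerFun (q ^ 2) ^ 8 = (eulerFun (q ^ 2) ^ 4) ^ 2 by ring, ← hE, ← hE2]
  linear_combination -(eulerFun (q ^ 3) * eulerFun (q ^ 6) ^ 2) * hprod

theorem cubicProduct_quadratic_mul_eulerFun [NeZero (2 : K)] (hω : IsPrimitiveRoot ω 3)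
    (hxq : x ^ 3 = q) (hx0 : x ≠ 0) (hx : ‖x‖ < 1) :
    (1 - 7 * (q * cubicProduct q ^ 3) - 8 * (q * cubicProduct q ^ 3) ^ 2) *
        (eulerFun (q ^ 3) ^ 4 * eulerFun (q ^ 6) ^ 4) =
      cubicProduct q ^ 3 * (eulerFun q ^ 4 * eulerFun (q ^ 2) ^ 4) := by
  have hq : ‖q‖ < 1 := hxq ▸ norm_pow_lt_one hx three_ne_zero
  have hne : eulerFun q * eulerFun (q ^ 2) * eulerFun (q ^ 3) * eulerFun (q ^ 6) ≠ 0 :=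
    mul_ne_zero (mul_ne_zero (mul_ne_zero (eulerFun_ne_zero hq)
      (eulerFun_pow_ne_zero hq two_ne_zero)) (eulerFun_pow_ne_zero hq three_ne_zero))
      (eulerFun_pow_ne_zero hq (by norm_num))
  have hsub := one_sub_eight_mul_cubicProduct hω hxq hx0 hx
  have hadd := one_add_cubicProduct hω hxq hx0 hx
  refine mul_left_cancel₀ (pow_ne_zero 4 hne) ?_
  linear_combination (1 + q * cubicProduct q ^ 3) * (eulerFun (q ^ 6) ^ 8 * eulerFun q ^ 4) * hsub +
    eulerFun q ^ 8 * eulerFun (q ^ 6) ^ 4 * hadd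

end CubicIdentities

section Modular

variable {τ : ℂ}

lemma norm_exp_two_pi_I_mul_lt_one (hτ : 0 < τ.im) : ‖Complex.exp (2 * Real.pi * I * τ)‖ < 1 :=
  UpperHalfPlane.norm_exp_two_pi_I_lt_one ⟨τ, hτ⟩

lemma exp_div_three_pow_three (τ : ℂ) :
    Complex.exp (2 * Real.pi * I * τ / 3) ^ 3 = nome τ := by
  rw [nome, ← Complex.exp_nat_mul]
  push_cast
  ring_nf

lemma exp_div_twelve_pow_twentyFour (τ : ℂ) :
    Complex.exp (Real.pi * I * τ / 12) ^ 24 = nome τ := by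
  rw [nome, ← Complex.exp_nat_mul]
  push_cast
  ring_nf

lemma dedekindEta_natCast_mul (k : ℕ) (τ : ℂ) :
    dedekindEta (k * τ) = Complex.exp (Real.pi * I * τ / 12) ^ k * eulerFun (nome τ ^ k) := by
  rw [dedekindEta, eulerFun, qPoch, ← Complex.exp_nat_mul]
  congr 1
  · ring_nf
  · refine tprod_congr fun n ↦ ?_
    rw [← pow_succ', nome, ← Complex.exp_nat_mul, ← Complex.exp_nat_mul]
    push_cast
    ring_nf

lemma c_eq_exp_mul_cubicProduct (hτ : 0 < τ.im) :
    c τ = Complex.exp (2 * Real.pi * I * τ / 3) * cubicProduct (nome τ) := by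
  have hq : ‖nome τ‖ < 1 := norm_exp_two_pi_I_mul_lt_one hτ
  rw [c, cubicProduct]
  congr 1
  generalize nome τ = q at *
  have hterm (n : ℕ) : (1 - q ^ (6 * (n + 1) - 1)) * (1 - q ^ (6 * (n + 1) - 5)) /
        (1 - q ^ (6 * (n + 1) - 3)) ^ 2 =
      (1 - q * (q ^ 6) ^ n) * (1 - q ^ 5 * (q ^ 6) ^ n) / (1 - q ^ 3 * (q ^ 6) ^ n) ^ 2 := by
    rw [show 6 * (n + 1) - 1 = 5 + 6 * n by lia, show 6 * (n + 1) - 5 = 1 + 6 * n by lia,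
      show 6 * (n + 1) - 3 = 3 + 6 * n by lia]
    ring
  have hprod (a : ℂ) : HasProd (fun n : ℕ ↦ 1 - a * (q ^ 6) ^ n) (qPoch a (q ^ 6)) :=
    (multipliable_one_sub_mul_pow a (norm_pow_lt_one hq (by norm_num))).hasProd
  simp only [hterm]
  exact (((hprod q).mul (hprod (q ^ 5))).div₀ ((hprod (q ^ 3)).pow 2)
    (pow_ne_zero 2 (qPoch_pow_three_pow_six_ne_zero hq))).tprod_eq

end Modular

/-- For `τ` in the upper half-plane,
`(1 − 7c(τ)³ − 8c(τ)⁶)·η(3τ)⁴·η(6τ)⁴ = c(τ)³·η(τ)⁴·η(2τ)⁴`. -/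
theorem cubicCF_eta_quotient_cubed (τ : ℂ) (hτ : 0 < τ.im) :
    (1 - 7 * c τ ^ 3 - 8 * c τ ^ 6) * dedekindEta (3 * τ) ^ 4 * dedekindEta (6 * τ) ^ 4 =
      c τ ^ 3 * dedekindEta τ ^ 4 * dedekindEta (2 * τ) ^ 4 := by
  have hη1 := dedekindEta_natCast_mul 1 τ
  have hη2 := dedekindEta_natCast_mul 2 τ
  have hη3 := dedekindEta_natCast_mul 3 τ
  have hη6 := dedekindEta_natCast_mul 6 τ
  push_cast at hη1 hη2 hη3 hη6
  rw [one_mul, pow_one, pow_one] at hη1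
  have hc : c τ ^ 3 = nome τ * cubicProduct (nome τ) ^ 3 := by
    rw [c_eq_exp_mul_cubicProduct hτ, mul_pow, exp_div_three_pow_three]
  have hx : ‖Complex.exp (2 * Real.pi * I * τ / 3)‖ < 1 := by
    rw [mul_div_assoc]
    exact norm_exp_two_pi_I_mul_lt_one (by simpa using hτ)
  have hidentity := cubicProduct_quadratic_mul_eulerFun
    (Complex.isPrimitiveRoot_exp 3 three_ne_zero) (exp_div_three_pow_three τ)
    (Complex.exp_ne_zero _) hx
  rw [hη1, hη2, hη3, hη6, show c τ ^ 6 = (c τ ^ 3) ^ 2 by ring, hc]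
  linear_combination Complex.exp (Real.pi * I * τ / 12) ^ 36 * hidentity +
    cubicProduct (nome τ) ^ 3 * Complex.exp (Real.pi * I * τ / 12) ^ 12 *
    (eulerFun (nome τ) ^ 4 * eulerFun (nome τ ^ 2) ^ 4) * exp_div_twelve_pow_twentyFour τ
end
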